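/- Let R be a commutative ring, Λ an additive commutative monoid, and let A and B be commutative R-algebras equipped with gradings 𝒜 : Λ → Submodule R A and ℬ : Λ → Submodule R B making A and B Λ-graded R-algebras. For each λ ∈ Λ let S(λ) be the R-submodule of the tensor product algebra A ⊗_R B spanned by the simple tensors a ⊗ b with a ∈ 𝒜(λ) and b ∈ ℬ(λ). Then 1 ∈ S(0), S(λ₁)·S(λ₂) ⊆ S(λ₁+λ₂) for all λ₁, λ₂ ∈ Λ, the family of submodules S(λ) is independent, and the submodule ⨆_{λ∈Λ} S(λ) is an R-subalgebra of A ⊗_R B; thus this subalgebra (the diagonal tensor product A ⊗^Δ B) is itself a Λ-graded commutative R-algebra with graded pieces S(λ). -/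

import Mathlib

/-!
A decomposition of `A` induces a decomposition of `A ⊗[R] B` whose piece of degree `l` is the image
of `𝒜 l ⊗ B`, with no flatness needed because each `𝒜 l` is a direct summand of `A`. The diagonal
pieces are smaller in each degree, hence independent. They form a graded monoid because
multiplication in `A ⊗[R] B` is componentwise, and the supremum of such a family is always a
subalgebra.
-/

open scoped TensorProduct

/-- The `λ`-graded piece of the diagonal tensor product of two `Λ`-graded algebras:
the `R`-submodule of `A ⊗[R] B` spanned by the simple tensors `a ⊗ b` with
`a ∈ 𝒜 λ` and `b ∈ ℬ λ`. -/
def diagTensorPiece {R A B Λ : Type*} [CommRing R] [CommRing A] [CommRing B]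
    [Algebra R A] [Algebra R B] (𝒜 : Λ → Submodule R A) (ℬ : Λ → Submodule R B)
    (l : Λ) : Submodule R (A ⊗[R] B) :=
  Submodule.span R {x : A ⊗[R] B | ∃ a ∈ 𝒜 l, ∃ b ∈ ℬ l, x = a ⊗ₜ[R] b}

section Module

variable {R M N ι : Type*} [CommSemiring R] [AddCommMonoid M] [Module R M]

theorem range_rTensor_subtype [AddCommMonoid N] [Module R N] (p : Submodule R M) :
    LinearMap.range (p.subtype.rTensor N) = Submodule.map₂ (TensorProduct.mk R M N) p ⊤ := by
  rw [LinearMap.rTensor, TensorProduct.range_map, Submodule.range_subtype, LinearMap.range_id]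

theorem iSupIndep_map₂_mk [AddCommGroup N] [Module R N] [DecidableEq ι]
    (ℳ : ι → Submodule R M) [DirectSum.Decomposition ℳ] (𝒩 : ι → Submodule R N) :
    iSupIndep fun i ↦ Submodule.map₂ (TensorProduct.mk R M N) (ℳ i) (𝒩 i) := by
  have indep : iSupIndep (DirectSum.decomposeTensor ℳ N) :=
    (DirectSum.tensorDecomposition ℳ N).isInternal.submodule_iSupIndep
  refine indep.mono fun i ↦ ?_
  rw [DirectSum.decomposeTensor_apply, range_rTensor_subtype]
  exact Submodule.map₂_le_map₂_right le_top

end Module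

theorem map₂_mk_mul_map₂_mk {R A B : Type*} [CommSemiring R] [Semiring A] [Semiring B]
    [Algebra R A] [Algebra R B] (p p' : Submodule R A) (q q' : Submodule R B) :
    Submodule.map₂ (TensorProduct.mk R A B) p q * Submodule.map₂ (TensorProduct.mk R A B) p' q' =
      Submodule.map₂ (TensorProduct.mk R A B) (p * p') (q * q') := by
  rw [Submodule.map₂_eq_span_image2, Submodule.map₂_eq_span_image2, Submodule.span_mul_span,
    Submodule.mul_eq_span_mul_set p, Submodule.mul_eq_span_mul_set q, Submodule.map₂_span_span]
  congr 1
  exact Set.image2_image2_image2_comm fun a b a' b' ↦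
    Algebra.TensorProduct.tmul_mul_tmul a a' b b'

section diagTensorPiece

variable {R A B Λ : Type*} [CommRing R] [CommRing A] [CommRing B] [Algebra R A] [Algebra R B]
  (𝒜 : Λ → Submodule R A) (ℬ : Λ → Submodule R B)

theorem diagTensorPiece_eq_map₂ (l : Λ) :
    diagTensorPiece 𝒜 ℬ l = Submodule.map₂ (TensorProduct.mk R A B) (𝒜 l) (ℬ l) := by
  rw [Submodule.map₂_eq_span_image2, diagTensorPiece]
  simp only [Set.image2, SetLike.mem_coe, TensorProduct.mk_apply, eq_comm]

theorem iSupIndep_diagTensorPiece [DecidableEq Λ] [DirectSum.Decomposition 𝒜] :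
    iSupIndep (diagTensorPiece 𝒜 ℬ) := by
  simpa only [← diagTensorPiece_eq_map₂] using iSupIndep_map₂_mk 𝒜 ℬ

theorem one_mem_diagTensorPiece_zero [Zero Λ] [SetLike.GradedOne 𝒜] [SetLike.GradedOne ℬ] :
    (1 : A ⊗[R] B) ∈ diagTensorPiece 𝒜 ℬ 0 := by
  rw [diagTensorPiece_eq_map₂, Algebra.TensorProduct.one_def]
  exact Submodule.apply_mem_map₂ _ (SetLike.one_mem_graded 𝒜) (SetLike.one_mem_graded ℬ)

theorem diagTensorPiece_mul_diagTensorPiece_le [Add Λ] [SetLike.GradedMul 𝒜] [SetLike.GradedMul ℬ]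
    (l₁ l₂ : Λ) :
    diagTensorPiece 𝒜 ℬ l₁ * diagTensorPiece 𝒜 ℬ l₂ ≤ diagTensorPiece 𝒜 ℬ (l₁ + l₂) := by
  simp only [diagTensorPiece_eq_map₂, map₂_mk_mul_map₂_mk]
  exact Submodule.map₂_le_map₂ (Submodule.mul_le.2 fun _ ha _ ha' ↦ SetLike.mul_mem_graded ha ha')
    (Submodule.mul_le.2 fun _ hb _ hb' ↦ SetLike.mul_mem_graded hb hb')

instance diagTensorPiece.gradedMonoid [AddMonoid Λ] [SetLike.GradedMonoid 𝒜]
    [SetLike.GradedMonoid ℬ] : SetLike.GradedMonoid (diagTensorPiece 𝒜 ℬ) where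
  one_mem := one_mem_diagTensorPiece_zero 𝒜 ℬ
  mul_mem l₁ l₂ _ _ hx hy :=
    diagTensorPiece_mul_diagTensorPiece_le 𝒜 ℬ l₁ l₂ (Submodule.mul_mem_mul hx hy)

end diagTensorPiece

theorem diagTensorProduct_gradedAlgebra_general
    {R A B Λ : Type*} [CommRing R] [CommRing A] [CommRing B]
    [Algebra R A] [Algebra R B] [AddMonoid Λ] [DecidableEq Λ]
    (𝒜 : Λ → Submodule R A) (ℬ : Λ → Submodule R B)
    [GradedAlgebra 𝒜] [SetLike.GradedMonoid ℬ] :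
    (1 : A ⊗[R] B) ∈ diagTensorPiece 𝒜 ℬ (0 : Λ) ∧
    (∀ l₁ l₂ : Λ,
      diagTensorPiece 𝒜 ℬ l₁ * diagTensorPiece 𝒜 ℬ l₂ ≤ diagTensorPiece 𝒜 ℬ (l₁ + l₂)) ∧
    iSupIndep (diagTensorPiece 𝒜 ℬ) ∧
    (∃ T : Subalgebra R (A ⊗[R] B),
      Subalgebra.toSubmodule T = ⨆ l : Λ, diagTensorPiece 𝒜 ℬ l) :=
  ⟨one_mem_diagTensorPiece_zero 𝒜 ℬ, diagTensorPiece_mul_diagTensorPiece_le 𝒜 ℬ,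
    iSupIndep_diagTensorPiece 𝒜 ℬ,
    (DirectSum.coeAlgHom (diagTensorPiece 𝒜 ℬ)).range,
    (Submodule.iSup_eq_toSubmodule_range (diagTensorPiece 𝒜 ℬ)).symm⟩

/-- Construction 8.1(1): the diagonal tensor product of two `Λ`-graded commutative
`R`-algebras is again a `Λ`-graded commutative `R`-algebra, with graded pieces
`S(λ) = 𝒜(λ) ⊗ ℬ(λ)` inside `A ⊗[R] B`. -/
theorem diagTensorProduct_gradedAlgebra
    {R A B Λ : Type*} [CommRing R] [CommRing A] [CommRing B]
    [Algebra R A] [Algebra R B] [AddCommMonoid Λ] [DecidableEq Λ]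
    (𝒜 : Λ → Submodule R A) (ℬ : Λ → Submodule R B)
    [GradedAlgebra 𝒜] [GradedAlgebra ℬ] :
    (1 : A ⊗[R] B) ∈ diagTensorPiece 𝒜 ℬ (0 : Λ) ∧
    (∀ l₁ l₂ : Λ,
      diagTensorPiece 𝒜 ℬ l₁ * diagTensorPiece 𝒜 ℬ l₂ ≤ diagTensorPiece 𝒜 ℬ (l₁ + l₂)) ∧
    iSupIndep (diagTensorPiece 𝒜 ℬ) ∧
    (∃ T : Subalgebra R (A ⊗[R] B),
      Subalgebra.toSubmodule T = ⨆ l : Λ, diagTensorPiece 𝒜 ℬ l) :=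
  diagTensorProduct_gradedAlgebra_general 𝒜 ℬ
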